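/- arXiv:hep-th/0108083 — 3 statements merged into one kernel-verified Lean document; each statement's English description precedes it below -/
import Mathlib

section
/- Descent equations for derivatives of a gauge multiplet: let p : ℕ, let P : Fin p → R be a multiplet of polynomials, and let c be a finitely supported function from multi-indices to p×p real matrices such that d_q(P i) = ∑_{α, j} c(α)_{i j} · D_α(P j) for every i. Then for every k, all dual vectors v₁, …, v_k and every i: d_q(ρ(v₁)⋯ρ(v_k)(P i)) = ∑_{α, j} c(α)_{i j} · D_α(ρ(v₁)⋯ρ(v_k)(P j)) + ∑_{l=1}^{k} ∑_{α, j} c(α)_{i j} · (ρ(v₁)⋯ρ(∂_α v_l)⋯ρ(v_k))(P j) − ∑_{l=1}^{k} (ρ(v₁)⋯ρ(q·v_l)⋯ρ(v_k))(P i), where ∂_α v_l is the dual shift of v_l. -/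
open MvPolynomial

/-- Spacetime multi-indices on 4-dimensional spacetime. -/
abbrev MIdx : Type := Fin 4 →₀ ℕ

/-- Jet coordinates `(A, α)` of `N` classical fields: `A` is a field index and
`α` a spacetime multi-index. -/
abbrev JetIdx (N : ℕ) : Type := Fin N × MIdx

/-- Jet vectors: finitely supported real-valued functions on the jet coordinates. -/
abbrev Jet (N : ℕ) : Type := JetIdx N →₀ ℝ

/-- Dual vectors. -/
abbrev Dual (N : ℕ) : Type := JetIdx N → ℝ

/-- The dual shift `(∂_α v)(A, β) := v (A, β + α)`. -/
noncomputable def dShift {N : ℕ} (α : MIdx) (v : Dual N) : Dual N :=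
  fun p => v (p.1, p.2 + α)

/-- The commutative algebra of Wick-monomial symbols in the jet variables. -/
abbrev R (N : ℕ) : Type := MvPolynomial (JetIdx N) ℝ

/-- The derivative operator `ρ(v)`: the unique `ℝ`-derivation of `R` with
`ρ(v)(X (A,α)) = v (A,α)` (as a constant polynomial). -/
noncomputable def rho {N : ℕ} (v : Dual N) : Derivation ℝ (R N) (R N) :=
  MvPolynomial.mkDerivation ℝ fun p => (C (v p) : R N)

/-- The total spacetime derivative `D_α`: the unique `ℝ`-derivation of `R` with
`D_α (X (A,β)) = X (A, β+α)`. -/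
noncomputable def Dop {N : ℕ} (α : MIdx) : Derivation ℝ (R N) (R N) :=
  MvPolynomial.mkDerivation ℝ fun p => (X (p.1, p.2 + α) : R N)

/-- BRST coefficient systems: finitely supported functions from multi-indices to
`N × N` real matrices. -/
abbrev QSys (N : ℕ) : Type := MIdx →₀ Matrix (Fin N) (Fin N) ℝ

/-- The BRST derivation `d_q`: the unique `ℝ`-derivation of `R` with
`d_q (X (A,γ)) = ∑_{β, B} (q β) A B • X (B, γ+β)`. -/
noncomputable def dQ {N : ℕ} (q : QSys N) : Derivation ℝ (R N) (R N) :=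
  MvPolynomial.mkDerivation ℝ fun p =>
    ∑ β ∈ q.support, ∑ B, (q β) p.1 B • (X (B, p.2 + β) : R N)

/-- The action of a BRST coefficient system on dual vectors:
`(q · v)(A, γ) := ∑_{β, B} (q β) A B * v (B, γ+β)`. -/
noncomputable def qDual {N : ℕ} (q : QSys N) (v : Dual N) : Dual N :=
  fun p => ∑ β ∈ q.support, ∑ B, (q β) p.1 B * v (B, p.2 + β)

/-- The composition `ρ(v₁) ∘ ⋯ ∘ ρ(v_k)` of derivative operators. -/
noncomputable def rhoChain {N : ℕ} {k : ℕ} (v : Fin k → Dual N) : R N →ₗ[ℝ] R N :=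
  (List.ofFn fun i => (rho (v i)).toLinearMap).foldr (· ∘ₗ ·) LinearMap.id

theorem rhoChain_succ {N k : ℕ} (v : Fin (k+1) → Dual N) (F : R N) :
    rhoChain v F = rho (v 0) (rhoChain (Fin.tail v) F) := by
  simp [rhoChain, List.ofFn_succ, Fin.tail]

theorem rhoChain_zero {N : ℕ} (v : Fin 0 → Dual N) (F : R N) :
    rhoChain v F = F := by
  simp [rhoChain]

theorem tail_update_zero' {N k : ℕ} (v : Fin (k+1) → Dual N) (w : Dual N) :
    Fin.tail (Function.update v 0 w) = Fin.tail v := by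
  funext i
  simp [Fin.tail]

theorem tail_update_succ' {N k : ℕ} (v : Fin (k+1) → Dual N) (l : Fin k) (w : Dual N) :
    Fin.tail (Function.update v l.succ w) = Function.update (Fin.tail v) l w :=
  Fin.tail_update_succ v l w

theorem rho_Dop {N : ℕ} (α : MIdx) (v : Dual N) (F : R N) :
    rho v (Dop α F) = Dop α (rho v F) + rho (dShift α v) F := by
  have h : ⁅rho v, Dop α⁆ = rho (dShift α v) := by
    apply MvPolynomial.derivation_ext
    intro p
    rw [Derivation.commutator_apply]
    simp [rho, Dop, dShift, MvPolynomial.mkDerivation_X]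
  rw [← h, Derivation.commutator_apply]
  ring

theorem dQ_rho {N : ℕ} (q : QSys N) (v : Dual N) (F : R N) :
    dQ q (rho v F) = rho v (dQ q F) - rho (qDual q v) F := by
  have h : ⁅rho v, dQ q⁆ = rho (qDual q v) := by
    apply MvPolynomial.derivation_ext
    intro p
    rw [Derivation.commutator_apply]
    simp [rho, dQ, qDual, MvPolynomial.mkDerivation_X, MvPolynomial.smul_eq_C_mul]
  rw [← h, Derivation.commutator_apply]
  ring

/-- Descent equations for derivatives of a gauge multiplet. -/
theorem descent_equations (N : ℕ) (q : QSys N) (p : ℕ) (P : Fin p → R N)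
    (c : MIdx →₀ Matrix (Fin p) (Fin p) ℝ)
    (hP : ∀ i, dQ q (P i) = ∑ α ∈ c.support, ∑ j, (c α) i j • Dop α (P j))
    (k : ℕ) (v : Fin k → Dual N) (i : Fin p) :
    dQ q (rhoChain v (P i)) =
      (∑ α ∈ c.support, ∑ j, (c α) i j • Dop α (rhoChain v (P j)))
      + (∑ l : Fin k, ∑ α ∈ c.support, ∑ j, (c α) i j •
          rhoChain (Function.update v l (dShift α (v l))) (P j))
      - ∑ l : Fin k, rhoChain (Function.update v l (qDual q (v l))) (P i) := by
  induction k generalizing i with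
  | zero => simp [rhoChain_zero, hP]
  | succ k ih =>
    have e : ∀ l : Fin k, v l.succ = Fin.tail v l := fun _ => rfl
    simp only [rhoChain_succ, dQ_rho, ih, Fin.sum_univ_succ, map_add, map_sub, map_sum,
      Derivation.map_smul, rho_Dop, smul_add, Finset.sum_add_distrib, tail_update_zero',
      tail_update_succ', Function.update_self, e,
      Function.update_of_ne (Fin.succ_ne_zero _).symm]
    ring
end

section
/- On-shell nilpotency of the Yang–Mills BRST operator: the BRST derivation d of the Yang–Mills jet algebra maps the Klein–Gordon ideal I_KG into itself, and d(d(X_{(f,γ)})) ∈ I_KG for every field index f and every multi-index γ; in particular d² vanishes on the generators modulo the equations of motion. -/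
open MvPolynomial

/-- The Yang–Mills field index set: the four summands label the vector fields `A^μ_a`,
the ghosts `u_a`, the antighosts `ũ_a` and the scalars `Φ_a`. -/
abbrev YMIdx (r : ℕ) : Type := (Fin r × Fin 4) ⊕ (Fin r ⊕ (Fin r ⊕ Fin r))

/-- The colour of a Yang–Mills field. -/
def colour {r : ℕ} : YMIdx r → Fin r
  | Sum.inl (a, _) => a
  | Sum.inr (Sum.inl a) => a
  | Sum.inr (Sum.inr (Sum.inl a)) => a
  | Sum.inr (Sum.inr (Sum.inr a)) => a

/-- The Yang–Mills jet algebra. -/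
abbrev RYM (r : ℕ) : Type := MvPolynomial (YMIdx r × MIdx) ℝ

/-- The Minkowski signs `η^0 = 1`, `η^1 = η^2 = η^3 = -1`. -/
noncomputable def η : Fin 4 → ℝ := fun μ => if μ = 0 then 1 else -1

/-- The `μ`-th unit multi-index. -/
noncomputable def e (μ : Fin 4) : MIdx := Finsupp.single μ 1

/-- The Yang–Mills BRST derivation: the unique `ℝ`-derivation of `RYM` with
`d (X (A^μ_a, γ)) = η^μ • X (u_a, γ + e_μ)`, `d (X (u_a, γ)) = 0`,
`d (X (ũ_a, γ)) = -(∑ μ, X (A^μ_a, γ + e_μ) + m a • X (Φ_a, γ))` and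
`d (X (Φ_a, γ)) = m a • X (u_a, γ)`. -/
noncomputable def brst (r : ℕ) (m : Fin r → ℝ) : Derivation ℝ (RYM r) (RYM r) :=
  MvPolynomial.mkDerivation ℝ fun p =>
    match p with
    | (Sum.inl (a, μ), γ) => η μ • (X (Sum.inr (Sum.inl a), γ + e μ) : RYM r)
    | (Sum.inr (Sum.inl _), _) => 0
    | (Sum.inr (Sum.inr (Sum.inl a)), γ) =>
        -((∑ μ, (X (Sum.inl (a, μ), γ + e μ) : RYM r))
          + m a • (X (Sum.inr (Sum.inr (Sum.inr a)), γ) : RYM r))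
    | (Sum.inr (Sum.inr (Sum.inr a)), γ) => m a • (X (Sum.inr (Sum.inl a), γ) : RYM r)

/-- The Klein–Gordon generator `κ_{(f,γ)}` of the equations of motion. -/
noncomputable def kg (r : ℕ) (m : Fin r → ℝ) (f : YMIdx r) (γ : MIdx) : RYM r :=
  (X (f, γ + Finsupp.single 0 2) : RYM r)
    - (∑ i ∈ ({1, 2, 3} : Finset (Fin 4)), (X (f, γ + Finsupp.single i 2) : RYM r))
    + (m (colour f)) ^ 2 • (X (f, γ) : RYM r)

/-- The Klein–Gordon ideal `I_KG`. -/
noncomputable def IKG (r : ℕ) (m : Fin r → ℝ) : Ideal (RYM r) :=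
  Ideal.span {p : RYM r | ∃ f γ, p = kg r m f γ}

theorem kg_mem_IKG (r : ℕ) (m : Fin r → ℝ) (f : YMIdx r) (γ : MIdx) :
    kg r m f γ ∈ IKG r m := Ideal.subset_span ⟨f, γ, rfl⟩

theorem kg_expand (r : ℕ) (m : Fin r → ℝ) (f : YMIdx r) (γ : MIdx) :
    kg r m f γ = (X (f, γ + Finsupp.single 0 2) : RYM r)
      - (X (f, γ + Finsupp.single 1 2) + (X (f, γ + Finsupp.single 2 2)
        + X (f, γ + Finsupp.single 3 2)))
      + (m (colour f)) ^ 2 • (X (f, γ) : RYM r) := by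
  unfold kg
  rw [Finset.sum_insert (by decide), Finset.sum_insert (by decide), Finset.sum_singleton]

theorem brst_A (r : ℕ) (m : Fin r → ℝ) (a : Fin r) (μ : Fin 4) (γ : MIdx) :
    brst r m (X (Sum.inl (a, μ), γ)) = η μ • (X (Sum.inr (Sum.inl a), γ + e μ) : RYM r) :=
  mkDerivation_X _ _ _

theorem brst_u (r : ℕ) (m : Fin r → ℝ) (a : Fin r) (γ : MIdx) :
    brst r m (X (Sum.inr (Sum.inl a), γ)) = 0 :=
  mkDerivation_X _ _ _

theorem brst_anti (r : ℕ) (m : Fin r → ℝ) (a : Fin r) (γ : MIdx) :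
    brst r m (X (Sum.inr (Sum.inr (Sum.inl a)), γ)) =
      -((∑ μ, (X (Sum.inl (a, μ), γ + e μ) : RYM r))
          + m a • (X (Sum.inr (Sum.inr (Sum.inr a)), γ) : RYM r)) :=
  mkDerivation_X _ _ _

theorem brst_Phi (r : ℕ) (m : Fin r → ℝ) (a : Fin r) (γ : MIdx) :
    brst r m (X (Sum.inr (Sum.inr (Sum.inr a)), γ)) =
      m a • (X (Sum.inr (Sum.inl a), γ) : RYM r) :=
  mkDerivation_X _ _ _

theorem brst_kg_mem (r : ℕ) (m : Fin r → ℝ) (f : YMIdx r) (γ : MIdx) :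
    brst r m (kg r m f γ) ∈ IKG r m := by
  rcases f with ⟨a, μ⟩ | a | a | a
  · have h : brst r m (kg r m (Sum.inl (a, μ)) γ)
        = η μ • kg r m (Sum.inr (Sum.inl a)) (γ + e μ) := by
      simp only [kg_expand, map_add, map_sub, Derivation.map_smul, brst_A, colour,
        add_right_comm γ _ (e μ), smul_add, smul_sub, smul_comm (η μ) (m a ^ 2)]
    rw [h]
    exact Submodule.smul_of_tower_mem _ _ (kg_mem_IKG r m _ _)
  · simp [kg_expand, brst_u]
  · have h : brst r m (kg r m (Sum.inr (Sum.inr (Sum.inl a))) γ)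
        = -((∑ μ, kg r m (Sum.inl (a, μ)) (γ + e μ))
          + m a • kg r m (Sum.inr (Sum.inr (Sum.inr a))) γ) := by
      simp only [kg_expand, map_add, map_sub, Derivation.map_smul, brst_anti, colour,
        Fin.sum_univ_four, add_right_comm γ _ (e _), smul_add, smul_sub, smul_neg,
        smul_comm (m a) (m a ^ 2)]
      abel
    rw [h]
    exact neg_mem (add_mem (sum_mem fun μ _ => kg_mem_IKG r m _ _)
      (Submodule.smul_of_tower_mem _ _ (kg_mem_IKG r m _ _)))
  · have h : brst r m (kg r m (Sum.inr (Sum.inr (Sum.inr a))) γ)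
        = m a • kg r m (Sum.inr (Sum.inl a)) γ := by
      simp only [kg_expand, map_add, map_sub, Derivation.map_smul, brst_Phi, colour,
        smul_add, smul_sub, smul_comm (m a) (m a ^ 2)]
    rw [h]
    exact Submodule.smul_of_tower_mem _ _ (kg_mem_IKG r m _ _)

theorem brst_sq_anti (r : ℕ) (m : Fin r → ℝ) (a : Fin r) (γ : MIdx) :
    brst r m (brst r m (X (Sum.inr (Sum.inr (Sum.inl a)), γ))) =
      -kg r m (Sum.inr (Sum.inl a)) γ := by
  have he : ∀ μ, γ + e μ + e μ = γ + Finsupp.single μ 2 := by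
    intro μ
    rw [add_assoc, e, ← Finsupp.single_add]
  have h0 : η 0 = 1 := by simp [η]
  have h1 : η 1 = -1 := by simp [η]
  have h2 : η 2 = -1 := by simp [η]
  have h3 : η 3 = -1 := by simp [η]
  simp only [kg_expand, brst_anti, map_add, map_neg, Fin.sum_univ_four, Derivation.map_smul,
    brst_A, brst_Phi, colour, he, h0, h1, h2, h3, one_smul, neg_smul, smul_smul, pow_two]
  abel

/-- On-shell nilpotency of the Yang–Mills BRST operator: `d` maps `I_KG` into itself and
`d (d (X (f, γ))) ∈ I_KG` for every field index `f` and multi-index `γ`. -/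
theorem brst_onshell_nilpotent (r : ℕ) (m : Fin r → ℝ) :
    (∀ x ∈ IKG r m, brst r m x ∈ IKG r m) ∧
    ∀ (f : YMIdx r) (γ : MIdx), brst r m (brst r m (X (f, γ))) ∈ IKG r m := by
  refine ⟨fun x hx => ?_, fun f γ => ?_⟩
  · refine Submodule.span_induction (p := fun x _ => brst r m x ∈ IKG r m)
      ?_ ?_ ?_ ?_ hx
    · rintro _ ⟨f, γ, rfl⟩
      exact brst_kg_mem r m f γ
    · simp
    · intro x y _ _ hx hy
      rw [map_add]
      exact add_mem hx hy
    · intro c x hx' hx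
      rw [smul_eq_mul, Derivation.leibniz, smul_eq_mul, smul_eq_mul]
      exact add_mem (Ideal.mul_mem_left _ _ hx) (Ideal.mul_mem_right _ _ hx')
  · rcases f with ⟨a, μ⟩ | a | a | a
    · simp [brst_A, brst_u]
    · simp [brst_u]
    · rw [brst_sq_anti]
      exact neg_mem (kg_mem_IKG r m _ _)
    · simp [brst_Phi, brst_u]
end

section
/- An operator commuting with all field components is a multiple of the identity: if a linear endomorphism T of R satisfies T ∘ M_i = M_i ∘ T and T ∘ pderiv i = pderiv i ∘ T for every i ∈ σ, then there exists c ∈ ℝ with T = c • id. -/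
open MvPolynomial

/-- An operator commuting with multiplication by every variable and with every formal
partial derivative is a real multiple of the identity. -/
theorem commutes_with_fields_imp_scalar (σ : Type*)
    (T : MvPolynomial σ ℝ →ₗ[ℝ] MvPolynomial σ ℝ)
    (hM : ∀ i : σ, T ∘ₗ LinearMap.mulLeft ℝ (X i) = LinearMap.mulLeft ℝ (X i) ∘ₗ T)
    (hD : ∀ i : σ, T ∘ₗ (MvPolynomial.pderiv i).toLinearMap
        = (MvPolynomial.pderiv i).toLinearMap ∘ₗ T) :
    ∃ c : ℝ, T = c • LinearMap.id := by
  have h0 : ∀ i, pderiv i (T 1) = 0 := by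
    intro i
    have h := LinearMap.congr_fun (hD i) 1
    simpa using h.symm
  have hc : T 1 = C (coeff 0 (T 1)) := by
    classical
    ext m
    rw [coeff_C]
    split_ifs with hm
    · rw [← hm]
    · obtain ⟨i, hi⟩ : ∃ i, m i ≠ 0 := by
        by_contra! hcon
        exact hm (Finsupp.ext fun i => (hcon i).symm)
      have h := congrArg (coeff (m - Finsupp.single i 1)) (h0 i)
      have hle : Finsupp.single i 1 ≤ m := by
        rw [Finsupp.single_le_iff]
        omega
      rw [coeff_pderiv, tsub_add_cancel_of_le hle, coeff_zero] at h
      refine (mul_eq_zero.mp h).resolve_right ?_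
      positivity
  refine ⟨coeff 0 (T 1), LinearMap.ext fun p => ?_⟩
  have key : T p = p * T 1 := by
    induction p using MvPolynomial.induction_on with
    | C a =>
      rw [C_mul', ← map_smul, smul_eq_C_mul, mul_one]
    | add p q hp hq => rw [map_add, hp, hq, add_mul]
    | mul_X p i hp =>
      have h := LinearMap.congr_fun (hM i) p
      simp only [LinearMap.comp_apply, LinearMap.mulLeft_apply] at h
      rw [mul_comm p, h, hp, mul_assoc]
  rw [key, hc]
  simp [smul_eq_C_mul, mul_comm]
end
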